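/- arXiv:1509.02013 — 2 statements merged into one kernel-verified Lean document; each statement's English description precedes it below -/
import Mathlib

section
/- Let q be an odd prime power and let f ∈ F_q[T] be a monic separable polynomial with f(0) ≠ 0. Then f is a sum of two squares if and only if for every root ω of f in an algebraic closure of F_q, the element −ω is a square in the field F_q(ω). -/
/-!
With `S = √-T`, the ring `F[S]` is the quadratic extension `F[T][√-T]` of `F[T]`, and its norm form
is `A² + T B²`. So `f` is a sum of two squares iff `f(-S²) = g(S) g(-S)` for some `g`.

If `f = A² + T B²` and `f(ω) = 0`, then `A(ω) / B(ω)` is a square root of `-ω`, unless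
`A(ω) = B(ω) = 0`, in which case the square of the minimal polynomial of `ω` divides `f`.
Conversely, norms are multiplicative, so it suffices to treat the minimal polynomial of `ω`. If
`x ∈ F(ω)` is a square root of `-ω`, the norm of the minimal polynomial of `x` is monic, vanishes at
`ω` and has degree `[F(x) : F] ≤ [F(ω) : F]`, so it is the minimal polynomial of `ω`.
-/

section

open Polynomial
open scoped IntermediateField

/-- The polynomials `A ^ 2 + X * B ^ 2`, as a multiplicative submonoid: these are the norms from
`R[X][√-X]`. -/
def sumsOfTwoSquares (R : Type*) [CommRing R] : Submonoid R[X] where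
  carrier := {f | ∃ A B, f = A ^ 2 + X * B ^ 2}
  one_mem' := ⟨1, 0, by ring⟩
  mul_mem' := by
    rintro _ _ ⟨A, B, rfl⟩ ⟨C, D, rfl⟩
    exact ⟨_, _, sq_add_mul_sq_mul_sq_add_mul_sq⟩

theorem exists_eq_comp_neg_X_sq_add_X_mul {R : Type*} [CommRing R] (g : R[X]) :
    ∃ A B : R[X], g = A.comp (-X ^ 2) + X * B.comp (-X ^ 2) := by
  induction g using Polynomial.induction_on' with
  | add p q hp hq =>
    obtain ⟨A, B, rfl⟩ := hp
    obtain ⟨C, D, rfl⟩ := hq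
    exact ⟨A + C, B + D, by simp only [add_comp]; ring⟩
  | monomial n a =>
    rcases n.even_or_odd' with ⟨k, rfl | rfl⟩
    · refine ⟨C a * (-X) ^ k, 0, ?_⟩
      simp [← C_mul_X_pow_eq_monomial, pow_mul]
    · refine ⟨0, C a * (-X) ^ k, ?_⟩
      simp only [← C_mul_X_pow_eq_monomial, zero_comp, mul_comp, C_comp, pow_comp, neg_comp, X_comp,
        neg_neg]
      ring

theorem exists_mem_sumsOfTwoSquares_comp_neg_X_sq_eq {R : Type*} [CommRing R] (g : R[X]) :
    ∃ f ∈ sumsOfTwoSquares R, f.comp (-X ^ 2) = g * g.comp (-X) := by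
  obtain ⟨A, B, rfl⟩ := exists_eq_comp_neg_X_sq_add_X_mul g
  refine ⟨A ^ 2 + X * B ^ 2, ⟨A, B, rfl⟩, ?_⟩
  simp only [add_comp, mul_comp, pow_comp, X_comp, comp_assoc, neg_comp, neg_sq]
  ring

section Norm

variable {R : Type*} [CommRing R] [IsDomain R] {f g : R[X]}

theorem natDegree_eq_of_comp_neg_X_sq_eq (h : f.comp (-X ^ 2) = g * g.comp (-X)) :
    f.natDegree = g.natDegree := by
  have hdeg : f.natDegree * 2 = (g * g.comp (-X)).natDegree := by
    simpa [natDegree_comp] using congrArg natDegree h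
  rcases eq_or_ne g 0 with rfl | hg
  · simpa using hdeg
  · rw [natDegree_mul hg (comp_neg_X_eq_zero_iff.not.mpr hg), natDegree_comp, natDegree_neg,
      natDegree_X] at hdeg
    omega

theorem leadingCoeff_eq_sq_of_comp_neg_X_sq_eq (h : f.comp (-X ^ 2) = g * g.comp (-X)) :
    f.leadingCoeff = g.leadingCoeff ^ 2 := by
  have hlead := congrArg leadingCoeff h
  rw [leadingCoeff_comp (by simp), leadingCoeff_mul, leadingCoeff_comp (by simp),
    natDegree_eq_of_comp_neg_X_sq_eq h, ← mul_assoc] at hlead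
  simpa [sq] using hlead

end Norm

variable {F K : Type*} [Field F] [Field K] [Algebra F K] {f : F[X]} {ω x : K}

theorem mem_of_monic_of_forall_irreducible_mem (S : Submonoid F[X]) (hf : f.Monic)
    (h : ∀ p : F[X], p.Monic → Irreducible p → p ∣ f → p ∈ S) : f ∈ S := by
  classical
  rw [← hf.normalize_eq_self, ← UniqueFactorizationMonoid.prod_normalizedFactors_eq hf.ne_zero]
  refine S.multiset_prod_mem _ fun p hp => ?_
  obtain ⟨hirr, hmonic, hdvd⟩ := (Polynomial.mem_normalizedFactors_iff hf.ne_zero).mp hp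
  exact h p hmonic hirr hdvd

theorem natDegree_minpoly_le_of_mem_adjoin (hω : IsIntegral F ω) (hx : x ∈ F⟮ω⟯) :
    (minpoly F x).natDegree ≤ (minpoly F ω).natDegree := by
  have : FiniteDimensional F F⟮ω⟯ := IntermediateField.adjoin.finiteDimensional hω
  rw [← IntermediateField.adjoin.finrank hω, ← IntermediateField.minpoly_eq (⟨x, hx⟩ : F⟮ω⟯)]
  exact minpoly.natDegree_le _

theorem minpoly_mem_sumsOfTwoSquares (hω : IsIntegral F ω) (hx : x ∈ F⟮ω⟯) (hxω : x ^ 2 = -ω) :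
    minpoly F ω ∈ sumsOfTwoSquares F := by
  have hxint : IsIntegral F x := .of_pow two_pos (hxω ▸ hω.neg)
  obtain ⟨N, hN, hnorm⟩ := exists_mem_sumsOfTwoSquares_comp_neg_X_sq_eq (minpoly F x)
  have hmonic : N.Monic := by
    rw [Monic, leadingCoeff_eq_sq_of_comp_neg_X_sq_eq hnorm, minpoly.monic hxint, one_pow]
  have hroot : aeval ω N = 0 := by
    simpa [aeval_comp, hxω] using congrArg (aeval x) hnorm
  have hdeg : N.natDegree ≤ (minpoly F ω).natDegree :=
    (natDegree_eq_of_comp_neg_X_sq_eq hnorm).trans_le (natDegree_minpoly_le_of_mem_adjoin hω hx)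
  rwa [← eq_of_monic_of_dvd_of_natDegree_le (minpoly.monic hω) hmonic (minpoly.dvd F ω hroot) hdeg]

theorem exists_sq_eq_neg_root_of_mem_sumsOfTwoSquares (hf : f ∈ sumsOfTwoSquares F)
    (hsq : Squarefree f) (hω : aeval ω f = 0) : ∃ x ∈ F⟮ω⟯, x ^ 2 = -ω := by
  obtain ⟨A, B, rfl⟩ := hf
  have hzero : aeval ω A ^ 2 + ω * aeval ω B ^ 2 = 0 := by simpa using hω
  have hB : aeval ω B ≠ 0 := by
    intro hB
    have hA : aeval ω A = 0 := by simpa [hB] using hzero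
    have hdvdA := minpoly.dvd F ω hA
    have hdvdB := minpoly.dvd F ω hB
    refine minpoly.not_isUnit F ω (hsq _ ?_)
    rw [← sq]
    exact (pow_dvd_pow_of_dvd hdvdA 2).add ((pow_dvd_pow_of_dvd hdvdB 2).mul_left X)
  refine ⟨aeval ω A / aeval ω B, (IntermediateField.mem_adjoin_simple_iff F _).mpr ⟨A, B, rfl⟩, ?_⟩
  rw [div_pow, div_eq_iff (pow_ne_zero 2 hB)]
  linear_combination hzero

theorem mem_sumsOfTwoSquares_of_forall_root (hf : f.Monic)
    (hsplits : (f.map (algebraMap F K)).Splits)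
    (h : ∀ ω : K, aeval ω f = 0 → ∃ x ∈ F⟮ω⟯, x ^ 2 = -ω) : f ∈ sumsOfTwoSquares F := by
  refine mem_of_monic_of_forall_irreducible_mem _ hf fun p hmonic hirr hdvd => ?_
  have hpsplits : (p.map (algebraMap F K)).Splits :=
    hsplits.of_dvd (hf.map _).ne_zero (Polynomial.map_dvd _ hdvd)
  obtain ⟨ω, hω⟩ := hpsplits.exists_eval_eq_zero (by simpa using hirr.degree_pos.ne')
  rw [eval_map_algebraMap] at hω
  obtain ⟨x, hx, hxω⟩ := h ω (aeval_eq_zero_of_dvd_aeval_eq_zero hdvd hω)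
  rw [minpoly.eq_of_irreducible_of_monic hirr hω hmonic]
  exact minpoly_mem_sumsOfTwoSquares ⟨p, hmonic, hω⟩ hx hxω

theorem sum_of_two_squares_iff_neg_roots_squares_general (hf : f.Monic) (hsq : Squarefree f)
    (hsplits : (f.map (algebraMap F K)).Splits) :
    (∃ A B : F[X], f = A ^ 2 + X * B ^ 2) ↔
      ∀ ω : K, aeval ω f = 0 → ∃ x ∈ F⟮ω⟯, x ^ 2 = -ω :=
  ⟨fun h _ => exists_sq_eq_neg_root_of_mem_sumsOfTwoSquares h hsq,
    mem_sumsOfTwoSquares_of_forall_root hf hsplits⟩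

end

/-- Let `q` be odd and `f ∈ F_q[T]` monic, separable, with `f(0) ≠ 0`. Then `f` is a sum
of two squares (`f = A² + T·B²`) if and only if for every root `ω` of `f` in an algebraic
closure, `-ω` is a square in `F_q(ω)`. -/
theorem sum_of_two_squares_iff_neg_roots_squares
    (F : Type) [Field F] [Fintype F] (hodd : Odd (Fintype.card F))
    (f : Polynomial F) (hf : f.Monic) (hsep : f.Separable) (h0 : f.eval 0 ≠ 0) :
    (∃ A B : Polynomial F, f = A ^ 2 + Polynomial.X * B ^ 2) ↔
      ∀ ω : AlgebraicClosure F, Polynomial.aeval ω f = 0 →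
        ∃ x ∈ IntermediateField.adjoin F {ω}, x ^ 2 = -ω :=
  sum_of_two_squares_iff_neg_roots_squares_general hf hsep.squarefree (IsAlgClosed.splits _)
end

section
/- Let K be a field of characteristic different from 2 and let f ∈ K[T] be a monic polynomial of degree n with distinct roots α₁, …, α_n in a splitting field L of f over K; set yᵢ = −αᵢ, so f(T) = ∏_{i=1}^n (T + yᵢ). Assume the Galois group Gal(L|K) acts on the n roots as the full symmetric group S_n (equivalently |Gal(L|K)| = n!). Let δ ∈ K be the element whose image in L equals the discriminant ∏_{1 ≤ i < j ≤ n} (yᵢ − yⱼ)². If f(0) and δ are square-independent in K, and f(0) and y₁ are square-independent in K(y₁), then f(0) and y₁ are square-independent in L. -/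
/-!
Let `F = K(y₁)` and let `D = ∏_{i<j} (yᵢ - yⱼ)`, so `D² = δ` and `σ D = sign(σ) D`. If an element
of `K` or of `F` becomes a square `z²` in `L`, then `σ z = ± z` defines a quadratic character of
`Gal(L|K) ≅ S_n` or of `Gal(L|F) ≅ S_{n-1}`. Such a character is trivial or the sign, so `z` or
`z D` lies in the ground field: the element, or its product with `δ`, was already a square there.
Over `K` this shows that `f(0)` is not a square in `L`. Over `F`, where `f(0)^a y₁` is not a
square for `a ≤ 1`, if it becomes a square in `L` then `f(0)^a y₁ δ` is a square in `F`. Since `y₁`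
has norm `∏ yᵢ = f(0)`, taking norms makes `f(0)^(a[F:K] + 1) δ^[F:K]` a square in `K`, and one of
the two exponents is odd.
-/

open Equiv.Perm (sign)
open scoped IntermediateField

/-- Square-independence of two elements `x`, `y`: the only product `x ^ a * y ^ b` with exponents
`a, b ∈ {0, 1}` that is a square is the empty one. -/
def SquareIndependent {M : Type*} [Monoid M] (x y : M) : Prop :=
  ∀ a b : ℕ, a ≤ 1 → b ≤ 1 → (∃ z, x ^ a * y ^ b = z ^ 2) → a = 0 ∧ b = 0

theorem squareIndependent_iff {M : Type*} [Monoid M] {x y : M} :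
    SquareIndependent x y ↔ ¬IsSquare x ∧ ¬IsSquare y ∧ ¬IsSquare (x * y) := by
  simp only [SquareIndependent, ← isSquare_iff_exists_sq]
  constructor
  · intro h
    refine ⟨fun hx ↦ ?_, fun hy ↦ ?_, fun hxy ↦ ?_⟩
    · simpa using h 1 0 le_rfl zero_le_one (by simpa using hx)
    · simpa using h 0 1 zero_le_one le_rfl (by simpa using hy)
    · simpa using h 1 1 le_rfl le_rfl (by simpa using hxy)
  · rintro ⟨hx, hy, hxy⟩ a b ha hb hsq
    interval_cases a <;> interval_cases b <;> simp_all

theorem SquareIndependent.even_and_even_of_isSquare {M : Type*} [CommGroupWithZero M] {x y : M}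
    (h : SquareIndependent x y) {a b : ℕ} (hsq : IsSquare (x ^ a * y ^ b)) : Even a ∧ Even b := by
  obtain ⟨hx, hy, -⟩ := squareIndependent_iff.mp h
  have hx₀ : x ≠ 0 := by rintro rfl; exact hx IsSquare.zero
  have hy₀ : y ≠ 0 := by rintro rfl; exact hy IsSquare.zero
  have hmod : x ^ a * y ^ b =
      x ^ (a % 2) * y ^ (b % 2) * (x ^ (a / 2) * y ^ (b / 2)) ^ 2 := by
    conv_lhs => rw [← Nat.mod_add_div a 2, ← Nat.mod_add_div b 2]
    simp only [pow_add, mul_pow, ← pow_mul, mul_comm 2]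
    exact mul_mul_mul_comm _ _ _ _
  have hred : IsSquare (x ^ (a % 2) * y ^ (b % 2)) := by
    rw [← mul_div_cancel_right₀ (x ^ (a % 2) * y ^ (b % 2))
      (pow_ne_zero 2 (mul_ne_zero (pow_ne_zero (a / 2) hx₀) (pow_ne_zero (b / 2) hy₀))), ← hmod]
    exact hsq.div (IsSquare.sq _)
  simpa only [Nat.even_iff] using
    h _ _ (Nat.lt_succ_iff.mp (Nat.mod_lt a two_pos)) (Nat.lt_succ_iff.mp (Nat.mod_lt b two_pos))
      ((isSquare_iff_exists_sq _).mp hred)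

section QuadraticCharacters

variable {G : Type*} [Group G]

theorem exists_monoidHom_smul_eq_of_smul_sq_eq {R : Type*} [CommRing R] [NoZeroDivisors R]
    [DistribMulAction G R] {z : R} (hz : ∀ g : G, (g • z) ^ 2 = z ^ 2) :
    ∃ χ : G →* ℤˣ, ∀ g, g • z = χ g • z := by
  classical
  have hpm (g : G) : g • z = z ∨ g • z = -z := sq_eq_sq_iff_eq_or_eq_neg.mp (hz g)
  by_cases hneg : -z = z
  · exact ⟨1, fun g ↦ by simpa [hneg] using hpm g⟩
  · let χ : G →* ℤˣ :=
      { toFun g := if g • z = z then 1 else -1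
        map_one' := by simp
        map_mul' g h := by
          rcases hpm g with hg | hg <;> rcases hpm h with hh | hh <;>
            simp [mul_smul, hg, hh, hneg] }
    refine ⟨χ, fun g ↦ ?_⟩
    rcases hpm g with hg | hg <;> simp [χ, hg, hneg]

variable {ι : Type*} [Fintype ι] [DecidableEq ι]

theorem permHom_eq_one_or_eq_sign (χ : Equiv.Perm ι →* ℤˣ) : χ = 1 ∨ χ = sign := by
  by_cases h : ∃ τ, χ τ = -1
  · obtain ⟨τ, hτ⟩ := h
    refine Or.inr (Equiv.Perm.eq_sign_of_surjective_hom fun u ↦ ?_)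
    rcases Int.units_eq_one_or u with rfl | rfl
    exacts [⟨1, map_one χ⟩, ⟨τ, hτ⟩]
  · push Not at h
    exact Or.inl (MonoidHom.ext fun τ ↦ (Int.units_eq_one_or (χ τ)).resolve_right (h τ))

theorem monoidHom_eq_one_or_eq_of_comp_eq_sign {φ : Equiv.Perm ι →* G} (hφ : Function.Surjective φ)
    {ε : G →* ℤˣ} (hε : ε.comp φ = sign) (χ : G →* ℤˣ) : χ = 1 ∨ χ = ε :=
  (permHom_eq_one_or_eq_sign (χ.comp φ)).imp
    (fun h ↦ (MonoidHom.cancel_right hφ).mp (h.trans (MonoidHom.one_comp φ).symm))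
    (fun h ↦ (MonoidHom.cancel_right hφ).mp (h.trans hε.symm))

theorem monoidHom_eq_one_or_eq_sign_comp_of_range_eq_stabilizer {r : G →* Equiv.Perm ι}
    (hr : Function.Injective r) {o : ι} (hrange : r.range = MulAction.stabilizer (Equiv.Perm ι) o)
    (χ : G →* ℤˣ) : χ = 1 ∨ χ = sign.comp r := by
  have hmem (s : Equiv.Perm {i // i ≠ o}) : Equiv.Perm.ofSubtype s ∈ r.range := by
    rw [hrange, MulAction.mem_stabilizer_iff]
    exact Equiv.Perm.ofSubtype_apply_of_not_mem s (not_not.mpr rfl)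
  let φ : Equiv.Perm {i // i ≠ o} →* G :=
    (MonoidHom.ofInjective hr).symm.toMonoidHom.comp (Equiv.Perm.ofSubtype.codRestrict r.range hmem)
  have hrφ (s) : r (φ s) = Equiv.Perm.ofSubtype s := MonoidHom.apply_ofInjective_symm hr _
  have hφ : Function.Surjective φ := fun g ↦ by
    have hg : r g o = o := hrange.le ⟨g, rfl⟩
    obtain ⟨s, hs⟩ : ∃ s : Equiv.Perm {i // i ≠ o}, Equiv.Perm.ofSubtype s = r g :=
      ⟨(Equiv.Perm.subtypeEquivSubtypePerm _).symm ⟨r g, fun i hi ↦ by rwa [not_not.mp hi]⟩,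
        congrArg Subtype.val ((Equiv.Perm.subtypeEquivSubtypePerm _).apply_symm_apply _)⟩
    exact ⟨s, hr ((hrφ s).trans hs)⟩
  exact monoidHom_eq_one_or_eq_of_comp_eq_sign hφ (MonoidHom.ext fun s ↦ by simp [hrφ]) χ

end QuadraticCharacters

section Galois

variable {K L : Type*} [Field K] [Field L] [Algebra K L]

theorem isSquare_or_isSquare_mul_of_isSquare_algebraMap [IsGalois K L] {ε : Gal(L/K) →* ℤˣ}
    (hε : ∀ χ : Gal(L/K) →* ℤˣ, χ = 1 ∨ χ = ε) {D : L} (hD : ∀ σ : Gal(L/K), σ D = ε σ • D)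
    {δ : K} (hδ : algebraMap K L δ = D ^ 2) {x : K} (hx : IsSquare (algebraMap K L x)) :
    IsSquare x ∨ IsSquare (x * δ) := by
  have of_fixed {u : K} {w : L} (hu : algebraMap K L u = w ^ 2) (hw : ∀ σ : Gal(L/K), σ w = w) :
      IsSquare u := by
    obtain ⟨v, rfl⟩ := (InfiniteGalois.mem_range_algebraMap_iff_fixed w).mpr hw
    exact (isSquare_iff_exists_sq u).mpr
      ⟨v, (algebraMap K L).injective (by rw [hu, map_pow])⟩
  obtain ⟨z, hz⟩ := (isSquare_iff_exists_sq _).mp hx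
  obtain ⟨χ, hχ⟩ : ∃ χ : Gal(L/K) →* ℤˣ, ∀ σ, σ • z = χ σ • z :=
    exists_monoidHom_smul_eq_of_smul_sq_eq fun σ ↦ by
      rw [← smul_pow', ← hz, AlgEquiv.smul_def, AlgEquiv.commutes]
  simp only [AlgEquiv.smul_def] at hχ
  rcases hε χ with rfl | rfl
  · exact Or.inl (of_fixed hz fun σ ↦ by simp [hχ])
  · refine Or.inr (of_fixed (w := z * D) (by rw [map_mul, hz, hδ, mul_pow]) fun σ ↦ ?_)
    rw [map_mul, hχ, hD, smul_mul_smul_comm, Int.units_mul_self, one_smul]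

theorem algebraMap_norm_gen_eq_prod [IsGalois K L] {ι : Type*} [Fintype ι] {y : ι → L}
    (hy : Function.Injective y) {x : L} (horbit : MulAction.orbit Gal(L/K) x = Set.range y) :
    algebraMap K L (Algebra.norm K (IntermediateField.AdjoinSimple.gen K x)) = ∏ i, y i := by
  have haroots : (minpoly K x).aroots L = Finset.univ.val.map y := by
    have hsep : (minpoly K x).Separable := IsGalois.separable K x
    refine (Multiset.Nodup.ext (Polynomial.nodup_roots hsep.map)
      (Finset.univ.nodup.map hy)).mpr fun z ↦ ?_
    rw [← isConjRoot_iff_mem_minpoly_aroots (IsGalois.integral K x), IsConjRoot.comm,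
      isConjRoot_iff_exists_algEquiv]
    simpa [Set.ext_iff, MulAction.mem_orbit_iff] using Set.ext_iff.mp horbit z
  rw [IntermediateField.AdjoinSimple.norm_gen_eq_prod_roots x (IsGalois.splits K x), haroots,
    Finset.prod_map_val]

theorem map_det_vandermonde {R F : Type*} [CommRing R] [FunLike F R R] [RingHomClass F R R] {n : ℕ}
    {y : Fin n → R} {σ : F} {τ : Equiv.Perm (Fin n)} (h : ∀ i, σ (y i) = y (τ i)) :
    σ (Matrix.vandermonde y).det = sign τ • (Matrix.vandermonde y).det := by
  have hperm : (Matrix.vandermonde y).map σ = (Matrix.vandermonde y).submatrix τ id := by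
    ext i j
    simp [Matrix.vandermonde_apply, h]
  rw [← RingHom.coe_coe σ, RingHom.map_det, RingHom.mapMatrix_apply, RingHom.coe_coe, hperm,
    Matrix.det_permute, Units.smul_def, zsmul_eq_mul]

theorem det_vandermonde_sq {R : Type*} [CommRing R] {n : ℕ} (y : Fin n → R) :
    (Matrix.vandermonde y).det ^ 2 = ∏ i, ∏ j ∈ Finset.Ioi i, (y i - y j) ^ 2 := by
  simp only [Matrix.det_vandermonde, ← Finset.prod_pow, sub_sq_comm]

section RootPermutations

open Polynomial

variable (K L) in
theorem toPermHom_rootSet_injective (f : K[X]) [f.IsSplittingField K L] :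
    Function.Injective (MulAction.toPermHom Gal(L/K) (f.rootSet L)) := fun σ τ h ↦ by
  have hroots : Set.EqOn (σ : L →ₐ[K] L) (τ : L →ₐ[K] L) (f.rootSet L) := fun x hx ↦
    congrArg Subtype.val (Equiv.congr_fun h ⟨x, hx⟩)
  have hhom := AlgHom.ext_of_adjoin_eq_top (IsSplittingField.adjoin_rootSet L f) hroots
  exact AlgEquiv.ext fun x ↦ DFunLike.congr_fun hhom x

theorem exists_mulEquiv_perm_of_card_eq_factorial {ι : Type*} [Fintype ι] {f : K[X]}
    [f.IsSplittingField K L] {α : ι → L} (hα : Function.Injective α)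
    (hrange : Set.range α = f.rootSet L)
    (hcard : Nat.card Gal(L/K) = (Fintype.card ι).factorial) :
    ∃ e : Gal(L/K) ≃* Equiv.Perm ι, ∀ σ i, σ (α i) = α (e σ i) := by
  classical
  let a : ι ≃ f.rootSet L := (Equiv.ofInjective α hα).trans (Equiv.setCongr hrange)
  have hbij : Function.Bijective (MulAction.toPermHom Gal(L/K) (f.rootSet L)) := by
    refine (Nat.bijective_iff_injective_and_card _).mpr
      ⟨toPermHom_rootSet_injective K L f, ?_⟩
    rw [hcard, Nat.card_perm, ← Nat.card_congr a, Nat.card_eq_fintype_card]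
  refine ⟨(MulEquiv.ofBijective _ hbij).trans a.symm.permCongrHom, fun σ i ↦ ?_⟩
  exact congrArg Subtype.val (a.apply_symm_apply (σ • a i)).symm

theorem rootSet_eq_range_of_map_eq_prod {ι : Type*} [Fintype ι] {f : K[X]} {α : ι → L}
    (hf : f.map (algebraMap K L) = ∏ i, (X - C (α i))) : f.rootSet L = Set.range α := by
  classical
  have hroots : (∏ i, (X - C (α i))).roots = Finset.univ.val.map α := by
    rw [← roots_multiset_prod_X_sub_C (Finset.univ.val.map α), Multiset.map_map]
    rfl
  ext z
  simp [rootSet_def, aroots_def, hf, hroots]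

end RootPermutations

section SymmetricGroup

variable {ι : Type*} {y : ι → L} {e : Gal(L/K) ≃* Equiv.Perm ι}

theorem orbit_eq_range_of_mulEquiv_perm (he : ∀ σ i, σ (y i) = y (e σ i)) (o : ι) :
    MulAction.orbit Gal(L/K) (y o) = Set.range y := by
  ext z
  constructor
  · rintro ⟨σ, rfl⟩
    exact ⟨e σ o, (he σ o).symm⟩
  · classical
    rintro ⟨i, rfl⟩
    exact ⟨e.symm (Equiv.swap o i), by simp [he]⟩

theorem range_comp_restrictScalarsHom_eq_stabilizer (hy : Function.Injective y)
    (he : ∀ σ i, σ (y i) = y (e σ i)) (o : ι) :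
    (e.toMonoidHom.comp (AlgEquiv.restrictScalarsHom K : Gal(L/K⟮y o⟯) →* Gal(L/K))).range =
      MulAction.stabilizer (Equiv.Perm ι) o := by
  ext τ
  constructor
  · rintro ⟨σ, rfl⟩
    refine hy ((he _ o).symm.trans ?_)
    exact σ.commutes (IntermediateField.AdjoinSimple.gen K (y o))
  · intro hτ
    have hfix : e.symm τ (y o) = y o := by
      rw [he, e.apply_symm_apply]
      exact congrArg y hτ
    have hmem : e.symm τ ∈ K⟮y o⟯.fixingSubgroup :=
      (IntermediateField.mem_fixingSubgroup_iff _ _).mpr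
        ((IntermediateField.forall_mem_adjoin_smul_eq_self_iff K (e.symm τ)).mpr
          (by simpa using hfix))
    exact ⟨K⟮y o⟯.fixingSubgroupEquiv ⟨_, hmem⟩, e.apply_symm_apply τ⟩

variable [IsGalois K L] [Fintype ι] [DecidableEq ι] {D : L} {δ : K}

theorem isSquare_or_isSquare_mul_of_isSquare_coe (hy : Function.Injective y)
    (he : ∀ σ i, σ (y i) = y (e σ i)) (hD : ∀ σ, σ D = sign (e σ) • D)
    (hδ : algebraMap K L δ = D ^ 2) {o : ι} {x : K⟮y o⟯} (hx : IsSquare (x : L)) :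
    IsSquare x ∨ IsSquare (x * algebraMap K K⟮y o⟯ δ) := by
  have hinj : Function.Injective
      (e.toMonoidHom.comp (AlgEquiv.restrictScalarsHom K : Gal(L/K⟮y o⟯) →* Gal(L/K))) :=
    e.injective.comp (AlgEquiv.restrictScalars_injective K)
  refine isSquare_or_isSquare_mul_of_isSquare_algebraMap
    (monoidHom_eq_one_or_eq_sign_comp_of_range_eq_stabilizer hinj
      (range_comp_restrictScalarsHom_eq_stabilizer hy he o))
    (fun σ ↦ hD (σ.restrictScalars K)) ?_ hx
  rw [← IsScalarTower.algebraMap_apply, hδ]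

theorem squareIndependent_algebraMap_of_eq_prod (hy : Function.Injective y)
    (he : ∀ σ i, σ (y i) = y (e σ i)) (hD : ∀ σ, σ D = sign (e σ) • D)
    (hδ : algebraMap K L δ = D ^ 2) {c : K} (hc : algebraMap K L c = ∏ i, y i)
    (hcδ : SquareIndependent c δ) {o : ι}
    (hcy : SquareIndependent (algebraMap K K⟮y o⟯ c) (IntermediateField.AdjoinSimple.gen K (y o))) :
    SquareIndependent (algebraMap K L c) (y o) := by
  set g := IntermediateField.AdjoinSimple.gen K (y o)
  set m := Module.finrank K K⟮y o⟯
  obtain ⟨hc_nsq, -, hcδ_nsq⟩ := squareIndependent_iff.mp hcδ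
  obtain ⟨-, hg_nsq, hcg_nsq⟩ := squareIndependent_iff.mp hcy
  have hnorm_g : Algebra.norm K g = c :=
    (algebraMap K L).injective
      ((algebraMap_norm_gen_eq_prod hy (orbit_eq_range_of_mulEquiv_perm he o)).trans hc.symm)
  have isSquare_norm {x : K⟮y o⟯} (hx_nsq : ¬IsSquare x) (hx : IsSquare (x : L)) :
      IsSquare (Algebra.norm K x * δ ^ m) := by
    have hxδ := (isSquare_or_isSquare_mul_of_isSquare_coe hy he hD hδ hx).resolve_left hx_nsq
    simpa only [map_mul, Algebra.norm_algebraMap] using hxδ.map (Algebra.norm K)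
  refine squareIndependent_iff.mpr ⟨fun hsq ↦ ?_, fun hsq ↦ ?_, fun hsq ↦ ?_⟩
  · have hchar : ∀ χ : Gal(L/K) →* ℤˣ, χ = 1 ∨ χ = sign.comp e.toMonoidHom :=
      monoidHom_eq_one_or_eq_of_comp_eq_sign (φ := e.symm.toMonoidHom) e.symm.surjective
        (MonoidHom.ext fun τ ↦ by simp)
    exact (isSquare_or_isSquare_mul_of_isSquare_algebraMap hchar hD hδ hsq).elim hc_nsq hcδ_nsq
  · have hsq_norm : IsSquare (c ^ 1 * δ ^ m) := by
      simpa only [hnorm_g, pow_one] using isSquare_norm hg_nsq hsq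
    exact Nat.not_even_one (hcδ.even_and_even_of_isSquare hsq_norm).1
  · have hsq_norm : IsSquare (c ^ (m + 1) * δ ^ m) := by
      simpa only [map_mul, Algebra.norm_algebraMap, hnorm_g, pow_succ] using
        isSquare_norm hcg_nsq hsq
    obtain ⟨hm_succ, hm⟩ := hcδ.even_and_even_of_isSquare hsq_norm
    exact Nat.even_add_one.mp hm_succ hm

end SymmetricGroup

end Galois

/-- Let `char K ≠ 2` and let `f ∈ K[T]` be monic of degree `n` with distinct roots
`α₁, …, α_n` in a splitting field `L` (so `f = ∏ (T + yᵢ)` with `yᵢ = -αᵢ`), and assume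
`Gal(L|K)` acts on the roots as the full symmetric group (i.e. `|Gal(L|K)| = n!`). Let
`δ ∈ K` map to the discriminant `∏_{i<j} (yᵢ - yⱼ)²`. If `f(0)` and `δ` are
square-independent in `K`, and `f(0)` and `y₁` are square-independent in `K(y₁)`, then
`f(0)` and `y₁` are square-independent in `L`. -/
theorem square_independent_in_splitting_field
    (K L : Type) [Field K] [Field L] [Algebra K L] (hchar : ringChar K ≠ 2)
    (n : ℕ) (hn : 0 < n) (f : Polynomial K) (hmon : f.Monic) (hdeg : f.natDegree = n)
    (hsplit : Polynomial.IsSplittingField K L f)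
    (α : Fin n → L) (hinj : Function.Injective α)
    (hroots : f.map (algebraMap K L) = ∏ i : Fin n, (Polynomial.X - Polynomial.C (α i)))
    (hGal : Nat.card (L ≃ₐ[K] L) = Nat.factorial n)
    (δ : K)
    (hδ : algebraMap K L δ =
      ∏ i : Fin n, ∏ j ∈ Finset.Ioi i, ((-α i) - (-α j)) ^ 2)
    (hsqK : ∀ a b : ℕ, a ≤ 1 → b ≤ 1 →
      (∃ z : K, (f.eval 0) ^ a * δ ^ b = z ^ 2) → a = 0 ∧ b = 0)
    (hsqKy : ∀ a b : ℕ, a ≤ 1 → b ≤ 1 →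
      (∃ z ∈ IntermediateField.adjoin K {(-α ⟨0, hn⟩ : L)},
        (algebraMap K L (f.eval 0)) ^ a * (-α ⟨0, hn⟩) ^ b = z ^ 2) → a = 0 ∧ b = 0) :
    ∀ a b : ℕ, a ≤ 1 → b ≤ 1 →
      (∃ z : L, (algebraMap K L (f.eval 0)) ^ a * (-α ⟨0, hn⟩) ^ b = z ^ 2) →
      a = 0 ∧ b = 0 := by
  have hsep : f.Separable := by
    rw [← Polynomial.separable_map (algebraMap K L), hroots]
    exact Polynomial.separable_prod_X_sub_C_iff.mpr hinj
  have : IsGalois K L := IsGalois.of_separable_splitting_field hsep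
  obtain ⟨e, he⟩ := exists_mulEquiv_perm_of_card_eq_factorial (f := f) hinj
    (rootSet_eq_range_of_map_eq_prod hroots).symm (by rw [hGal, Fintype.card_fin])
  have he_neg (σ : Gal(L/K)) (i : Fin n) : σ (-α i) = -α (e σ i) := by rw [map_neg, he]
  have hc : algebraMap K L (f.eval 0) = ∏ i, -α i := by
    rw [← Polynomial.eval_zero_map, hroots]
    simp [Polynomial.eval_prod]
  refine squareIndependent_algebraMap_of_eq_prod (neg_injective.comp hinj) he_neg
    (fun σ ↦ map_det_vandermonde (he_neg σ)) (hδ.trans (det_vandermonde_sq _).symm) hc hsqK ?_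
  rintro a b ha hb ⟨z, hz⟩
  exact hsqKy a b ha hb ⟨z, z.2, congrArg Subtype.val hz⟩
end
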